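/- Let S be the Motzkin monoid M_n or the Jones monoid J_n, let k be a field and ξ ∈ k ∖ {0}. If α ∈ S and α is not the identity element, then ξ·α belongs to the twisted variant S^ξ. -/

import Mathlib

open Relation

/-! ### The partition monoid and its planar submonoids -/

/-- Vertices of a partition diagram: `Sum.inl i` is the upper vertex `i`,
`Sum.inr i` is the lower vertex `i′`. -/
abbrev PV (n : ℕ) := Fin n ⊕ Fin n

/-- An element of the partition monoid `P_n`: a set partition of the `2n` vertices,
encoded as an equivalence relation (setoid). -/
abbrev PElt (n : ℕ) := Setoid (PV n)

/-- Three layers of vertices, used to form products. -/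
abbrev TV (n : ℕ) := Fin n ⊕ (Fin n ⊕ Fin n)

/-- Embedding of the vertices of the upper factor into the three layers. -/
def upEmb {n : ℕ} : PV n → TV n
  | .inl i => .inl i
  | .inr i => .inr (.inl i)

/-- Embedding of the vertices of the lower factor into the three layers. -/
def downEmb {n : ℕ} : PV n → TV n
  | .inl i => .inr (.inl i)
  | .inr i => .inr (.inr i)

/-- Embedding of the vertices of the product into the three layers. -/
def outEmb {n : ℕ} : PV n → TV n
  | .inl i => .inl i
  | .inr i => .inr (.inr i)

/-- The stacked graph of `a` on `b`: relations of `a` on layers 1–2 together with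
relations of `b` on layers 2–3. -/
def stackRel {n : ℕ} (a b : PElt n) : TV n → TV n → Prop := fun x y =>
  (∃ p q : PV n, a.r p q ∧ x = upEmb p ∧ y = upEmb q) ∨
  (∃ p q : PV n, b.r p q ∧ x = downEmb p ∧ y = downEmb q)

/-- The finest common coarsening (transitive closure) of the stacked graph. -/
def stackSetoid {n : ℕ} (a b : PElt n) : Setoid (TV n) :=
  EqvGen.setoid (stackRel a b)

/-- The product in the partition monoid: restrict the coarsening of the stacked graph
to the outer two layers. -/
def pmul {n : ℕ} (a b : PElt n) : PElt n :=
  Setoid.comap outEmb (stackSetoid a b)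

/-- The identity of the partition monoid: blocks `{i, i′}`. -/
def pid (n : ℕ) : PElt n :=
  ⟨fun x y => Sum.elim id id x = Sum.elim id id y,
    ⟨fun _ => rfl, fun h => h.symm, fun h₁ h₂ => h₁.trans h₂⟩⟩

/-- A vertex of the triple-layer graph lies in the identified middle row. -/
def isMiddle {n : ℕ} : TV n → Prop
  | .inr (.inl _) => True
  | _ => False

/-- `m(a,b)`: the number of floating components (components of the stacked graph of `a` on `b`
contained entirely in the identified middle row). -/
noncomputable def floatCount {n : ℕ} (a b : PElt n) : ℕ :=
  Nat.card {c : Quotient (stackSetoid a b) //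
    ∀ x : TV n, Quotient.mk (stackSetoid a b) x = c → isMiddle x}

/-- A block (equivalence class) is a transversal if it contains both an upper
and a lower vertex. -/
def IsTransClass {n : ℕ} (a : PElt n) (c : Quotient a) : Prop :=
  (∃ i : Fin n, Quotient.mk a (.inl i) = c) ∧ (∃ j : Fin n, Quotient.mk a (.inr j) = c)

/-- The rank of a partition: the number of transversal blocks. -/
noncomputable def prank {n : ℕ} (a : PElt n) : ℕ :=
  Nat.card {c : Quotient a // IsTransClass a c}

/-- Position of a vertex in the boundary order `1, …, n, n′, …, 1′` of the rectangle. -/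
def ordIdx (n : ℕ) : PV n → ℕ
  | .inl i => i.val
  | .inr i => 2 * n - 1 - i.val

/-- Planarity: the partition is non-crossing with respect to the boundary order
`1 < ⋯ < n < n′ < ⋯ < 1′`. -/
def IsPlanar {n : ℕ} (a : PElt n) : Prop :=
  ¬ ∃ w x y z : PV n, ordIdx n w < ordIdx n x ∧ ordIdx n x < ordIdx n y ∧
      ordIdx n y < ordIdx n z ∧ a.r w y ∧ a.r x z ∧ ¬ a.r w x

/-- The size of the block containing a given vertex. -/
noncomputable def blockCard {n : ℕ} (a : PElt n) (x : PV n) : ℕ :=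
  Nat.card {y : PV n // a.r x y}

/-- The Motzkin monoid: planar partitions with all blocks of size at most 2. -/
def Motzkin (n : ℕ) : Set (PElt n) :=
  {a | IsPlanar a ∧ ∀ x : PV n, blockCard a x ≤ 2}

/-- The Jones (Temperley–Lieb) monoid: planar partitions with all blocks of size
exactly 2. -/
def Jones (n : ℕ) : Set (PElt n) :=
  {a | IsPlanar a ∧ ∀ x : PV n, blockCard a x = 2}

/-! ### The interface graph -/

/-- Lower edge of the interface graph `Γ(a)`: a block `{i,j}` of `a` on upper vertices. -/
def LowEdge {n : ℕ} (a : PElt n) (i j : Fin n) : Prop :=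
  i ≠ j ∧ a.r (.inl i) (.inl j)

/-- Upper edge of the interface graph `Γ(a)`: a block `{i′,j′}` of `a` on lower vertices. -/
def UpEdge {n : ℕ} (a : PElt n) (i j : Fin n) : Prop :=
  i ≠ j ∧ a.r (.inr i) (.inr j)

/-- Vertex `i` of `Γ(a)` carries a lower edge. -/
def hasLow {n : ℕ} (a : PElt n) (i : Fin n) : Prop := ∃ j, LowEdge a i j

/-- Vertex `i` of `Γ(a)` carries an upper edge. -/
def hasUp {n : ℕ} (a : PElt n) (i : Fin n) : Prop := ∃ j, UpEdge a i j

/-- Vertex `i` is active downwards: the upper vertex `i` lies in a transversal of `a`. -/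
def activeDown {n : ℕ} (a : PElt n) (i : Fin n) : Prop := ∃ j : Fin n, a.r (.inl i) (.inr j)

/-- Vertex `i` is active upwards: the lower vertex `i′` lies in a transversal of `a`. -/
def activeUp {n : ℕ} (a : PElt n) (i : Fin n) : Prop := ∃ j : Fin n, a.r (.inr i) (.inl j)

/-- Vertex `i` is inert downwards: the upper vertex `i` is a singleton block of `a`. -/
def inertDown {n : ℕ} (a : PElt n) (i : Fin n) : Prop := ∀ y, a.r (.inl i) y → y = .inl i

/-- Vertex `i` is inert upwards: the lower vertex `i′` is a singleton block of `a`. -/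
def inertUp {n : ℕ} (a : PElt n) (i : Fin n) : Prop := ∀ y, a.r (.inr i) y → y = .inr i

/-- Adjacency in the interface graph `Γ(a)`. -/
def gedge {n : ℕ} (a : PElt n) (i j : Fin n) : Prop := LowEdge a i j ∨ UpEdge a i j

/-- Connectivity in the interface graph `Γ(a)`. -/
def gconn {n : ℕ} (a : PElt n) : Fin n → Fin n → Prop := EqvGen (gedge a)

/-- `θ` is (the vertex set of) a connected component of `Γ(a)`. -/
def IsComp {n : ℕ} (a : PElt n) (θ : Set (Fin n)) : Prop :=
  θ.Nonempty ∧ ∀ i ∈ θ, ∀ j : Fin n, (gconn a i j ↔ j ∈ θ)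

/-- `θ` is a cycle component of `Γ(a)`: every vertex carries both a lower and an upper edge. -/
def IsCycleComp {n : ℕ} (a : PElt n) (θ : Set (Fin n)) : Prop :=
  IsComp a θ ∧ ∀ i ∈ θ, hasLow a i ∧ hasUp a i

/-- `θ` is a path component of `Γ(a)`: some vertex misses an edge on some side. -/
def IsPathComp {n : ℕ} (a : PElt n) (θ : Set (Fin n)) : Prop :=
  IsComp a θ ∧ ∃ i ∈ θ, ¬ hasLow a i ∨ ¬ hasUp a i

/-- An inert path: every terminus is inert on its free side. -/
def IsInertPathComp {n : ℕ} (a : PElt n) (θ : Set (Fin n)) : Prop :=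
  IsPathComp a θ ∧ ∀ i ∈ θ,
    (¬ hasLow a i → inertDown a i) ∧ (¬ hasUp a i → inertUp a i)

/-- A trans-active path: even length (its two free ends lie on opposite sides) with
both termini active on their free sides. -/
def IsTransActivePathComp {n : ℕ} (a : PElt n) (θ : Set (Fin n)) : Prop :=
  IsPathComp a θ ∧
  (∃! i : Fin n, i ∈ θ ∧ ¬ hasLow a i) ∧ (∃! i : Fin n, i ∈ θ ∧ ¬ hasUp a i) ∧
  ∀ i ∈ θ, (¬ hasLow a i → activeDown a i) ∧ (¬ hasUp a i → activeUp a i)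

/-- The number of edges of `Γ(a)` contained in `θ` (its length, for a component `θ`). -/
noncomputable def compEdgeCount {n : ℕ} (a : PElt n) (θ : Set (Fin n)) : ℕ :=
  Nat.card {p : Fin n × Fin n // p.1 < p.2 ∧ p.1 ∈ θ ∧ p.2 ∈ θ ∧ LowEdge a p.1 p.2} +
  Nat.card {p : Fin n × Fin n // p.1 < p.2 ∧ p.1 ∈ θ ∧ p.2 ∈ θ ∧ UpEdge a p.1 p.2}

/-! ### The map `α ↦ α̂` and the sets `D`, `Θ(δ)` -/

/-- The 0-based position of `i` among the upward-active vertices. -/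
noncomputable def posUp {n : ℕ} (a : PElt n) (i : Fin n) : ℕ :=
  Nat.card {j : Fin n // j < i ∧ activeUp a j}

/-- The 0-based position of `i` among the downward-active vertices. -/
noncomputable def posDown {n : ℕ} (a : PElt n) (i : Fin n) : ℕ :=
  Nat.card {j : Fin n // j < i ∧ activeDown a j}

/-- `i` and `j` are consecutive upward-active vertices paired in forming `α̂`
(`i` in an even position `2t`, `j` in position `2t+1 < 2⌊r/2⌋`). -/
noncomputable def pairedUp {n : ℕ} (a : PElt n) (i j : Fin n) : Prop :=
  activeUp a i ∧ activeUp a j ∧ Even (posUp a i) ∧ posUp a j = posUp a i + 1 ∧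
    posUp a j < 2 * (prank a / 2)

/-- `i` and `j` are consecutive downward-active vertices paired in forming `α̂`. -/
noncomputable def pairedDown {n : ℕ} (a : PElt n) (i j : Fin n) : Prop :=
  activeDown a i ∧ activeDown a j ∧ Even (posDown a i) ∧ posDown a j = posDown a i + 1 ∧
    posDown a j < 2 * (prank a / 2)

/-- The transversal relations removed in forming `α̂` (those of the first `2⌊r/2⌋`
transversals). -/
noncomputable def removedTrans {n : ℕ} (a : PElt n) (x y : PV n) : Prop :=
  ∃ i j : Fin n, a.r (.inl i) (.inr j) ∧ posDown a i < 2 * (prank a / 2) ∧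
    ((x = .inl i ∧ y = .inr j) ∨ (x = .inr j ∧ y = .inl i))

/-- The generating relation of `α̂`: the relations of `α` minus the removed transversals,
plus the new blocks pairing consecutive active vertices. -/
noncomputable def hatRel {n : ℕ} (a : PElt n) (x y : PV n) : Prop :=
  (a.r x y ∧ ¬ removedTrans a x y) ∨
  (∃ i j : Fin n, pairedUp a i j ∧
      ((x = .inr i ∧ y = .inr j) ∨ (x = .inr j ∧ y = .inr i))) ∨
  (∃ i j : Fin n, pairedDown a i j ∧
      ((x = .inl i ∧ y = .inl j) ∨ (x = .inl j ∧ y = .inl i)))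

/-- The element `α̂` obtained from `α` by pairing off consecutive active vertices. -/
noncomputable def hat {n : ℕ} (a : PElt n) : PElt n := EqvGen.setoid (hatRel a)

/-- The idempotents of a subset `S` (with respect to the partition product). -/
def Eset {n : ℕ} (S : Set (PElt n)) : Set (PElt n) := {a ∈ S | pmul a a = a}

/-- `D(S) = D₀ ∪ E(D₁)`: the idempotents of `S` of rank at most 1. -/
def Dset {n : ℕ} (S : Set (PElt n)) : Set (PElt n) :=
  {d ∈ S | pmul d d = d ∧ prank d ≤ 1}

/-- `θ` lies (entirely) to the left of the leftmost transversal of `a`. -/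
def LeftOfTrans {n : ℕ} (a : PElt n) (θ : Set (Fin n)) : Prop :=
  ∀ i ∈ θ, ∀ j : Fin n, activeDown a j ∨ activeUp a j → i < j

/-- `Θ(a)`: the cycle components of `Γ(a)` lying entirely to the left of the leftmost
transversal. -/
def ThetaSet {n : ℕ} (a : PElt n) : Set (Set (Fin n)) :=
  {θ | IsCycleComp a θ ∧ LeftOfTrans a θ}

/-! ### Returns, special pairs and `θ`-covers -/

/-- The block `{i,j}` of `a` on upper vertices is an upper return: no upper block
`{k,l}` has `k<i<j<l`, and no transversal contains an upper vertex smaller than `i`. -/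
def UpperReturn {n : ℕ} (a : PElt n) (i j : Fin n) : Prop :=
  i < j ∧ a.r (.inl i) (.inl j) ∧
  (¬ ∃ k l : Fin n, k < i ∧ j < l ∧ a.r (.inl k) (.inl l)) ∧
  (¬ ∃ k : Fin n, k < i ∧ activeDown a k)

/-- The block `{i′,j′}` of `a` on lower vertices is a lower return. -/
def LowerReturn {n : ℕ} (a : PElt n) (i j : Fin n) : Prop :=
  i < j ∧ a.r (.inr i) (.inr j) ∧
  (¬ ∃ k l : Fin n, k < i ∧ j < l ∧ a.r (.inr k) (.inr l)) ∧
  (¬ ∃ k : Fin n, k < i ∧ activeUp a k)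

/-- The interface-graph adjacency of `a` after deleting the lower-vertex block `{i′,j′}`
and the upper-vertex block `{k,l}`. -/
def redEdge {n : ℕ} (a : PElt n) (i j k l : Fin n) (u v : Fin n) : Prop :=
  (LowEdge a u v ∧ ({u, v} : Set (Fin n)) ≠ {k, l}) ∨
  (UpEdge a u v ∧ ({u, v} : Set (Fin n)) ≠ {i, j})

/-- The relation generating the `θ`-cover `a − (e′,f)`, for `e′ = {i′,j′}` and
`f = {k,l}`: delete the two blocks, and join each freed upper vertex to the freed lower
vertex reached along its path. -/
def coverRel {n : ℕ} (a : PElt n) (i j k l : Fin n) (x y : PV n) : Prop :=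
  (a.r x y ∧ ({x, y} : Set (PV n)) ≠ {.inl k, .inl l} ∧
    ({x, y} : Set (PV n)) ≠ {.inr i, .inr j}) ∨
  (∃ u v : Fin n, u ∈ ({k, l} : Set (Fin n)) ∧ v ∈ ({i, j} : Set (Fin n)) ∧
    EqvGen (redEdge a i j k l) u v ∧
    ((x = .inl u ∧ y = .inr v) ∨ (x = .inr v ∧ y = .inl u)))

/-- The `θ`-cover `a − (e′,f)` as a partition. -/
def coverElt {n : ℕ} (a : PElt n) (i j k l : Fin n) : PElt n :=
  EqvGen.setoid (coverRel a i j k l)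

/-- `b` is a `θ`-cover of `a`: `θ ∈ Θ(a)` and `b = a − (e′,f)` for some special pair
`(e′,f)` over `θ` (one lower-return and one upper-return edge of `θ`). -/
def IsThetaCover {n : ℕ} (a : PElt n) (θ : Set (Fin n)) (b : PElt n) : Prop :=
  θ ∈ ThetaSet a ∧
  ∃ i j k l : Fin n, i ∈ θ ∧ j ∈ θ ∧ k ∈ θ ∧ l ∈ θ ∧
    LowerReturn a i j ∧ UpperReturn a k l ∧ b = coverElt a i j k l

/-- `a ≪_d b`: `a = b` or there is a chain of `θ`-covers from `a` to `b` along pairwise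
distinct cycles `θ ∈ Θ(d)`. -/
def llRel {n : ℕ} (d : PElt n) (a b : PElt n) : Prop :=
  a = b ∨ ∃ (h : ℕ) (θs : Fin h → Set (Fin n)) (as : Fin (h + 1) → PElt n),
    Function.Injective θs ∧ (∀ ι, θs ι ∈ ThetaSet d) ∧
    as 0 = a ∧ as (Fin.last h) = b ∧
    ∀ ι : Fin h, IsThetaCover (as ι.castSucc) (θs ι) (as ι.succ)

/-- The fibre `F_d = {α ∈ E(S) : α̂ = d}`. -/
def Fib {n : ℕ} (S : Set (PElt n)) (d : PElt n) : Set (PElt n) :=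
  {a ∈ Eset S | hat a = d}

/-- `C_d(θ) = C*_d(θ) ∪ {d}`, where `C*_d(θ)` is the set of `θ`-covers of `d`. -/
def CoverSet {n : ℕ} (d : PElt n) (θ : Set (Fin n)) : Set (PElt n) :=
  insert d {b | IsThetaCover d θ b}

/-- `u_θ`: the number of upper-return blocks among the edges of `θ`. -/
noncomputable def uRet {n : ℕ} (a : PElt n) (θ : Set (Fin n)) : ℕ :=
  Nat.card {p : Fin n × Fin n // p.1 ∈ θ ∧ p.2 ∈ θ ∧ UpperReturn a p.1 p.2}

/-- `l_θ`: the number of lower-return blocks among the edges of `θ`. -/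
noncomputable def lRet {n : ℕ} (a : PElt n) (θ : Set (Fin n)) : ℕ :=
  Nat.card {p : Fin n × Fin n // p.1 ∈ θ ∧ p.2 ∈ θ ∧ LowerReturn a p.1 p.2}

/-! ### Twisted semigroup algebras -/

variable {K : Type} [Field K]

/-- The underlying vector space of the semigroup algebra `k[P_n]`. -/
abbrev PAlg (n : ℕ) (K : Type) [Field K] := PElt n →₀ K

/-- The twisted multiplication on `k[P_n]`: on basis elements,
`a ∘ b = ξ^{m(a,b)} · (ab)`, extended bilinearly. -/
noncomputable def twistMul {n : ℕ} (ξ : K) (f g : PAlg n K) : PAlg n K :=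
  f.sum fun a ca => g.sum fun b cb =>
    Finsupp.single (pmul a b) (ca * cb * ξ ^ floatCount a b)

/-- The twisted variant `S^ξ`: the subsemigroup of `(k[S], ∘)` generated by (the basis
elements corresponding to) `S`. -/
def TwistedVariant {n : ℕ} (ξ : K) (S : Set (PElt n)) : Set (PAlg n K) :=
  ⋂₀ {T : Set (PAlg n K) | (∀ a ∈ S, Finsupp.single a (1 : K) ∈ T) ∧
      ∀ f ∈ T, ∀ g ∈ T, twistMul ξ f g ∈ T}

/-- The idempotents of a set of elements of the twisted algebra. -/
def EsetTwist {n : ℕ} (ξ : K) (X : Set (PAlg n K)) : Set (PAlg n K) :=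
  {f ∈ X | twistMul ξ f f = f}

/-- `⟨S^ξ, ξ·1⟩ = {ξ^i·α : i ∈ ℕ, α ∈ S}`. -/
def TwistNat {n : ℕ} (ξ : K) (S : Set (PElt n)) : Set (PAlg n K) :=
  {f | ∃ (i : ℕ), ∃ a ∈ S, f = Finsupp.single a (ξ ^ i)}

/-- `⟨S^ξ, ξ·1, ξ⁻¹·1⟩ = {ξ^i·α : i ∈ ℤ, α ∈ S}`. -/
def TwistInt {n : ℕ} (ξ : K) (S : Set (PElt n)) : Set (PAlg n K) :=
  {f | ∃ (i : ℤ), ∃ a ∈ S, f = Finsupp.single a (ξ ^ i)}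

/-! ### Idempotent statistics of the Jones monoid -/

/-- The number of cycle components of `Γ(a)`. -/
noncomputable def numCycles {n : ℕ} (a : PElt n) : ℕ :=
  Nat.card {θ : Set (Fin n) // IsCycleComp a θ}

/-- The number of path components of `Γ(a)`. -/
noncomputable def numPaths {n : ℕ} (a : PElt n) : ℕ :=
  Nat.card {θ : Set (Fin n) // IsPathComp a θ}

/-- `E_{n;c,p}`: the idempotents of the Jones monoid `J_n` with `c` cycle components and
`p` path components (out-of-range indices give the empty set). -/
def EJcp (n : ℕ) (c p : ℤ) : Set (PElt n) :=
  {a ∈ Jones n | pmul a a = a ∧ (numCycles a : ℤ) = c ∧ (numPaths a : ℤ) = p}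

/-- `e_{n;c,p} = |E_{n;c,p}|`. -/
noncomputable def eJ (n : ℕ) (c p : ℤ) : ℕ := Nat.card (EJcp n c p)

/-- `e_{n;·,p} = Σ_c e_{n;c,p}`: the number of idempotents of `J_n` of rank `p`. -/
noncomputable def eJdot (n : ℕ) (p : ℤ) : ℕ :=
  Nat.card {a : PElt n | a ∈ Jones n ∧ pmul a a = a ∧ (numPaths a : ℤ) = p}

/-- `S^{(1)}_{n;c,p} = Σ_{α ∈ E_{n;c,p}} Σ_{θ ∈ Θ(α)} (u_θ + l_θ)`. -/
noncomputable def S1 (n : ℕ) (c p : ℤ) : ℕ :=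
  ∑ᶠ a ∈ EJcp n c p, ∑ᶠ θ ∈ ThetaSet a, (uRet a θ + lRet a θ)

/-- `S^{(2)}_{n;c,p} = Σ_{α ∈ E_{n;c,p}} Σ_{θ₁ ≠ θ₂ ∈ Θ(α)} u_{θ₁}·l_{θ₂}`
(the inner sum over ordered pairs of distinct cycles). -/
noncomputable def S2 (n : ℕ) (c p : ℤ) : ℕ :=
  ∑ᶠ a ∈ EJcp n c p, ∑ᶠ q ∈ {q : Set (Fin n) × Set (Fin n) |
      q.1 ∈ ThetaSet a ∧ q.2 ∈ ThetaSet a ∧ q.1 ≠ q.2}, uRet a q.1 * lRet a q.2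

/-- `S^{(1)}_{n;·,p}`. -/
noncomputable def S1dot (n : ℕ) (p : ℤ) : ℕ :=
  ∑ᶠ a ∈ {a : PElt n | a ∈ Jones n ∧ pmul a a = a ∧ (numPaths a : ℤ) = p},
    ∑ᶠ θ ∈ ThetaSet a, (uRet a θ + lRet a θ)

/-- `S^{(2)}_{n;·,p}`. -/
noncomputable def S2dot (n : ℕ) (p : ℤ) : ℕ :=
  ∑ᶠ a ∈ {a : PElt n | a ∈ Jones n ∧ pmul a a = a ∧ (numPaths a : ℤ) = p},
    ∑ᶠ q ∈ {q : Set (Fin n) × Set (Fin n) |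
      q.1 ∈ ThetaSet a ∧ q.2 ∈ ThetaSet a ∧ q.1 ≠ q.2}, uRet a q.1 * lRet a q.2

/-! Let `A` be a block of `α` consisting of upper vertices only, and let `π` be the projection with
blocks `A`, `A′` and `{k, k′}` for `k ∉ A`. Then `π α = α`, and the only floating component of `π`
on `α` is the copy of `A` in the middle row; hence `π ∘ α = ξ α`, and it remains to find `A` with
`π ∈ S`. If every upper vertex of `α ∈ M_n` lay in a transversal, planarity would make the
transversals order preserving and `α` the identity, so a non-identity `α` has an upper block. An
upper block whose convex hull is minimal is an interval, because a block meeting one of its gaps is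
nested in that gap; for an interval `A`, the projection `π` is planar, and its blocks have size `2`
or `|A|`. -/

section

variable {n : ℕ} {a b : PElt n} {A : Set (Fin n)}

theorem rel_iff_mem_of_mem_classes {α : Type*} {r : Setoid α} {B : Set α} (hB : B ∈ r.classes)
    {x y : α} (hx : x ∈ B) : r x y ↔ y ∈ B := by
  obtain ⟨z, rfl⟩ := hB
  exact ⟨fun hxy => r.trans' (r.symm' hxy) hx, fun hy => r.trans' hx (r.symm' hy)⟩

theorem blockCard_eq_ncard {B : Set (PV n)} {x : PV n} (h : ∀ y, a x y ↔ y ∈ B) :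
    blockCard a x = B.ncard := by
  simp only [blockCard, h]
  exact Nat.card_coe_set_eq B

theorem eq_of_rel_of_blockCard_le_two {x y z : PV n} (hx : blockCard a x ≤ 2)
    (hxy : a x y) (hxz : a x z) (hy : y ≠ x) (hz : z ≠ x) : y = z := by
  by_contra hyz
  rw [blockCard_eq_ncard (B := {w | a x w}) fun _ => Iff.rfl] at hx
  exact hx.not_gt ((Set.two_lt_ncard).2 ⟨x, a.refl' x, y, hxy, z, hxz, hy.symm, hz.symm, hyz⟩)

theorem Jones_subset_Motzkin (n : ℕ) : Jones n ⊆ Motzkin n :=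
  fun _ ha => ⟨ha.1, fun x => (ha.2 x).le⟩

theorem exists_blockCard_eq_ncard (hA : Sum.inl '' A ∈ a.classes) :
    ∃ x, blockCard a x = A.ncard := by
  obtain ⟨x, hx⟩ := Setoid.nonempty_of_mem_partition a.isPartition_classes hA
  refine ⟨x, ?_⟩
  rw [blockCard_eq_ncard fun _ => rel_iff_mem_of_mem_classes hA hx,
    Set.ncard_image_of_injective A Sum.inl_injective]

theorem upper_block_mem_classes {i : Fin n} (hi : ¬ activeDown a i) :
    Sum.inl '' {j | a (.inl j) (.inl i)} ∈ a.classes := by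
  change Sum.inl '' (Sum.inl ⁻¹' {y | a y (.inl i)}) ∈ a.classes
  rw [Set.image_preimage_eq_of_subset]
  · exact a.mem_classes _
  · rintro (j | j) hj
    · exact ⟨j, rfl⟩
    · exact (hi ⟨j, a.symm' hj⟩).elim

@[simp]
theorem ordIdx_inl_lt_inl {i j : Fin n} : ordIdx n (.inl i) < ordIdx n (.inl j) ↔ i < j :=
  Iff.rfl

@[simp]
theorem ordIdx_inr_lt_inr {i j : Fin n} : ordIdx n (.inr i) < ordIdx n (.inr j) ↔ j < i := by
  simp only [ordIdx, Fin.lt_def]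
  omega

@[simp]
theorem ordIdx_inl_lt_inr (i j : Fin n) : ordIdx n (.inl i) < ordIdx n (.inr j) := by
  simp only [ordIdx]
  omega

@[simp]
theorem not_ordIdx_inr_lt_inl (i j : Fin n) : ¬ ordIdx n (.inr i) < ordIdx n (.inl j) :=
  (ordIdx_inl_lt_inr j i).not_gt

theorem IsPlanar.rel_of_crossing (ha : IsPlanar a) {w x y z : PV n}
    (hwx : ordIdx n w < ordIdx n x) (hxy : ordIdx n x < ordIdx n y) (hyz : ordIdx n y < ordIdx n z)
    (hwy : a w y) (hxz : a x z) : a w x := by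
  by_contra h
  exact ha ⟨w, x, y, z, hwx, hxy, hyz, hwy, hxz, h⟩

theorem IsPlanar.mem_image_inl_Ioo_of_rel (ha : IsPlanar a) {i j k : Fin n}
    (hij : a (.inl i) (.inl j)) (hik : ¬ a (.inl i) (.inl k)) (hk : k ∈ Set.Ioo i j)
    {y : PV n} (hky : a (.inl k) y) : y ∈ Sum.inl '' Set.Ioo i j := by
  obtain ⟨h_ik, h_kj⟩ := hk
  rcases y with m | m
  · refine ⟨m, ⟨?_, ?_⟩, rfl⟩ <;> by_contra! hm
    · rcases hm.lt_or_eq with hmi | rfl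
      · have h_mi : a (.inl m) (.inl i) :=
          ha.rel_of_crossing (y := .inl k) (z := .inl j) hmi h_ik h_kj (a.symm' hky) hij
        exact hik (a.symm' (a.trans' hky h_mi))
      · exact hik (a.symm' hky)
    · rcases hm.lt_or_eq with hjm | rfl
      · exact hik (ha.rel_of_crossing (y := .inl j) (z := .inl m) h_ik h_kj hjm hij hky)
      · exact hik (a.trans' hij (a.symm' hky))
  · exact (hik (ha.rel_of_crossing (y := .inl j) (z := .inr m)
      h_ik h_kj (ordIdx_inl_lt_inr j m) hij hky)).elim

theorem IsPlanar.exists_ordConnected_upper_block (ha : IsPlanar a)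
    (hA : Sum.inl '' A ∈ a.classes) :
    ∃ B : Set (Fin n), B.OrdConnected ∧ Sum.inl '' B ∈ a.classes := by
  obtain ⟨I, ⟨hI, B, hBI, hB⟩, hmin⟩ := exists_minimal_of_wellFoundedLT
    (fun I : Set (Fin n) => I.OrdConnected ∧ ∃ B ⊆ I, Sum.inl '' B ∈ a.classes)
    ⟨Set.univ, Set.ordConnected_univ, A, A.subset_univ, hA⟩
  have rel_iff {i : Fin n} (hi : i ∈ B) (j : Fin n) : a (.inl i) (.inl j) ↔ j ∈ B := by
    rw [rel_iff_mem_of_mem_classes hB (Set.mem_image_of_mem _ hi), Sum.inl_injective.mem_set_image]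
  refine ⟨B, ⟨fun i hi j hj k hk => ?_⟩, hB⟩
  by_contra hkB
  have hk_Ioo : k ∈ Set.Ioo i j :=
    ⟨hk.1.lt_of_ne (by rintro rfl; exact hkB hi), hk.2.lt_of_ne (by rintro rfl; exact hkB hj)⟩
  have block_subset {y : PV n} (hy : a (.inl k) y) : y ∈ Sum.inl '' Set.Ioo i j :=
    ha.mem_image_inl_Ioo_of_rel ((rel_iff hi j).2 hj) (mt (rel_iff hi k).1 hkB) hk_Ioo hy
  have hk_upper : ¬ activeDown a k := by
    rintro ⟨m, hm⟩
    simpa using block_subset hm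
  have hC_sub : {m | a (.inl m) (.inl k)} ⊆ Set.Ioo i j := fun m hm =>
    Sum.inl_injective.mem_set_image.1 (block_subset (a.symm' hm))
  have hI_sub : I ⊆ Set.Ioo i j :=
    hmin ⟨Set.ordConnected_Ioo, _, hC_sub, upper_block_mem_classes hk_upper⟩
      fun m hm => hI.out (hBI hi) (hBI hj) (Set.Ioo_subset_Icc_self hm)
  exact lt_irrefl i (hI_sub (hBI hi)).1

theorem eq_pid_of_rel (h_vert : ∀ i : Fin n, a (.inl i) (.inr i))
    (h_upper : ∀ i j : Fin n, a (.inl i) (.inl j) → i = j) : a = pid n := by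
  have rel_inl (x : PV n) : a (.inl (Sum.elim id id x)) x := by
    rcases x with i | i
    exacts [a.refl' _, h_vert i]
  ext x y
  change a x y ↔ Sum.elim id id x = Sum.elim id id y
  refine ⟨fun hxy => h_upper _ _ (a.trans' (rel_inl x) (a.trans' hxy (a.symm' (rel_inl y)))),
    fun hxy => a.trans' (a.symm' (rel_inl x)) ?_⟩
  rw [hxy]
  exact rel_inl y

theorem IsPlanar.strictMono_of_transversals (ha : IsPlanar a)
    (h_upper : ∀ i j : Fin n, a (.inl i) (.inl j) → i = j) {f : Fin n → Fin n}
    (hf : ∀ i, a (.inl i) (.inr (f i))) : StrictMono f := by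
  intro i j hij
  by_contra! hji
  rcases hji.lt_or_eq with hlt | heq
  · exact hij.ne (h_upper i j (ha.rel_of_crossing (y := .inr (f i)) (z := .inr (f j))
      hij (ordIdx_inl_lt_inr j (f i)) (ordIdx_inr_lt_inr.2 hlt) (hf i) (hf j)))
  · exact hij.ne (h_upper i j (a.trans' (hf i) (heq ▸ a.symm' (hf j))))

theorem eq_pid_of_forall_activeDown (ha : a ∈ Motzkin n)
    (h : ∀ i, activeDown a i) : a = pid n := by
  choose f hf using h
  have h_upper (i j : Fin n) (hij : a (.inl i) (.inl j)) : i = j := by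
    by_contra hne
    exact Sum.inl_ne_inr (eq_of_rel_of_blockCard_le_two (ha.2 _) hij (hf i)
      (Sum.inl_injective.ne (Ne.symm hne)) Sum.inr_ne_inl)
  have hmono : StrictMono f := ha.1.strictMono_of_transversals h_upper hf
  obtain rfl : f = id := le_antisymm hmono.le_id hmono.id_le
  exact eq_pid_of_rel hf h_upper

theorem exists_ordConnected_upper_block_of_ne_pid (ha : a ∈ Motzkin n)
    (hne : a ≠ pid n) : ∃ A : Set (Fin n), A.OrdConnected ∧ Sum.inl '' A ∈ a.classes := by
  obtain ⟨i, hi⟩ : ∃ i, ¬ activeDown a i := by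
    by_contra! h
    exact hne (eq_pid_of_forall_activeDown ha h)
  exact ha.1.exists_ordConnected_upper_block (upper_block_mem_classes hi)

open Classical in
/-- Labels for the blocks of `projection A`: each vertex outside `A` is labelled by its index, and
the copies of `A` in the two rows are labelled by their row. -/
noncomputable def projectionLabel (A : Set (Fin n)) (x : PV n) : Bool ⊕ Fin n :=
  if Sum.elim id id x ∈ A then .inl x.isLeft else .inr (Sum.elim id id x)

/-- The projection in `P_n` with blocks `A`, `A′` and `{k, k′}` for `k ∉ A`, encoded as the kernel
of a labelling of the vertices. -/
noncomputable abbrev projection (A : Set (Fin n)) : PElt n := Setoid.ker (projectionLabel A)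

theorem projection_inl_inl {i j : Fin n} :
    projection A (.inl i) (.inl j) ↔ i = j ∨ i ∈ A ∧ j ∈ A := by
  simp only [Setoid.ker_def, projectionLabel]
  grind

theorem projection_inr_inr {i j : Fin n} :
    projection A (.inr i) (.inr j) ↔ i = j ∨ i ∈ A ∧ j ∈ A := by
  simp only [Setoid.ker_def, projectionLabel]
  grind

theorem projection_inl_inr {i j : Fin n} : projection A (.inl i) (.inr j) ↔ i = j ∧ i ∉ A := by
  simp only [Setoid.ker_def, projectionLabel]
  grind

theorem projection_inr_inl {i j : Fin n} : projection A (.inr i) (.inl j) ↔ i = j ∧ i ∉ A := by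
  simp only [Setoid.ker_def, projectionLabel]
  grind

theorem blockCard_projection (x : PV n) :
    blockCard (projection A) x = A.ncard ∨ blockCard (projection A) x = 2 := by
  by_cases hx : Sum.elim id id x ∈ A
  · left
    rcases x with i | i
    · rw [← Set.ncard_image_of_injective A (Sum.inl_injective (β := Fin n))]
      refine blockCard_eq_ncard ?_
      rintro (j | j) <;> simp only [projection_inl_inl, projection_inl_inr] <;> grind
    · rw [← Set.ncard_image_of_injective A (Sum.inr_injective (α := Fin n))]
      refine blockCard_eq_ncard ?_
      rintro (j | j) <;> simp only [projection_inr_inl, projection_inr_inr] <;> grind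
  · right
    have hswap : x ≠ x.swap := by rcases x with i | i <;> simp
    rw [← Set.ncard_pair hswap]
    refine blockCard_eq_ncard ?_
    rcases x with i | i <;> rintro (j | j) <;>
      simp only [projection_inl_inl, projection_inl_inr, projection_inr_inr,
        projection_inr_inl] <;>
      grind

theorem isPlanar_projection (hA : A.OrdConnected) : IsPlanar (projection A) := by
  rintro ⟨w, x, y, z, hwx, hxy, hyz, hwy, hxz, h⟩
  have hA' {i j k : Fin n} (hi : i ∈ A) (hk : k ∈ A) (hij : i < j) (hjk : j < k) : j ∈ A :=
    hA.out hi hk ⟨hij.le, hjk.le⟩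
  rcases w with w | w <;> rcases x with x | x <;> rcases y with y | y <;> rcases z with z | z <;>
    simp only [ordIdx_inl_lt_inl, ordIdx_inr_lt_inr, not_ordIdx_inr_lt_inl, projection_inl_inl,
      projection_inl_inr, projection_inr_inr] at hwx hxy hyz hwy hxz h <;>
    grind

theorem projection_mem_Motzkin (hA : A.OrdConnected) (hcard : A.ncard ≤ 2) :
    projection A ∈ Motzkin n :=
  ⟨isPlanar_projection hA, fun x =>
    (blockCard_projection x).elim (fun h => h.trans_le hcard) fun h => h.le⟩

theorem projection_mem_Jones (hA : A.OrdConnected) (hcard : A.ncard = 2) :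
    projection A ∈ Jones n :=
  ⟨isPlanar_projection hA, fun x => (blockCard_projection x).elim (fun h => h.trans hcard) id⟩

theorem stackSetoid_le_iff {s : Setoid (TV n)} :
    stackSetoid a b ≤ s ↔ a ≤ s.comap upEmb ∧ b ≤ s.comap downEmb := by
  refine ⟨fun h => ⟨fun p q hpq => h (.rel _ _ (.inl ⟨p, q, hpq, rfl, rfl⟩)),
    fun p q hpq => h (.rel _ _ (.inr ⟨p, q, hpq, rfl, rfl⟩))⟩, fun ⟨ha, hb⟩ => ?_⟩
  refine Setoid.eqvGen_le ?_
  rintro _ _ (⟨p, q, hpq, rfl, rfl⟩ | ⟨p, q, hpq, rfl, rfl⟩)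
  exacts [ha hpq, hb hpq]

theorem stackSetoid_upEmb {p q : PV n} (h : a p q) :
    stackSetoid a b (upEmb p) (upEmb q) :=
  (stackSetoid_le_iff.1 le_rfl).1 h

theorem stackSetoid_downEmb {p q : PV n} (h : b p q) :
    stackSetoid a b (downEmb p) (downEmb q) :=
  (stackSetoid_le_iff.1 le_rfl).2 h

open Classical in
/-- Labels for the components of the stacked graph of `projection A` on `a`, where `A` is an upper
block of `a`: the label is `none` on the floating copy of `A` in the middle row, and elsewhere it is
the block of `a` in the outer rows to which the component restricts. -/
noncomputable def stackLabel (A : Set (Fin n)) (a : PElt n) : TV n → Option (Quotient a)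
  | .inl i => some (Quotient.mk a (.inl i))
  | .inr (.inl i) => if i ∈ A then none else some (Quotient.mk a (.inl i))
  | .inr (.inr i) => some (Quotient.mk a (.inr i))

theorem stackLabel_outEmb (p : PV n) : stackLabel A a (outEmb p) = some (Quotient.mk a p) := by
  rcases p with i | i <;> rfl

open Classical in
theorem stackLabel_downEmb (p : PV n) : stackLabel A a (downEmb p) =
    if p ∈ Sum.inl '' A then none else some (Quotient.mk a p) := by
  rcases p with i | i <;> simp [downEmb, stackLabel]

theorem stackLabel_eq_none_iff {x : TV n} :
    stackLabel A a x = none ↔ ∃ i ∈ A, x = .inr (.inl i) := by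
  rcases x with i | i | i <;> simp [stackLabel]

theorem stackSetoid_projection_le_ker_stackLabel (hA : Sum.inl '' A ∈ a.classes) :
    stackSetoid (projection A) a ≤ Setoid.ker (stackLabel A a) := by
  refine stackSetoid_le_iff.2 ⟨?_, fun p q hpq => ?_⟩
  · have mk_eq {i j : Fin n} (hi : i ∈ A) (hj : j ∈ A) :
        Quotient.mk a (.inl i) = Quotient.mk a (.inl j) :=
      Quotient.sound ((rel_iff_mem_of_mem_classes hA ⟨i, hi, rfl⟩).2 ⟨j, hj, rfl⟩)
    rintro (i | i) (j | j) hij <;>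
      simp only [projection_inl_inl, projection_inl_inr, projection_inr_inr,
        projection_inr_inl] at hij <;>
      simp only [Setoid.comap_rel, Setoid.ker_def, upEmb, stackLabel] <;>
      grind
  · have hmem : p ∈ Sum.inl '' A ↔ q ∈ Sum.inl '' A :=
      ⟨fun hp => (rel_iff_mem_of_mem_classes hA hp).1 hpq,
        fun hq => (rel_iff_mem_of_mem_classes hA hq).1 (a.symm' hpq)⟩
    simp only [Setoid.comap_rel, Setoid.ker_def, stackLabel_downEmb]
    classical
    exact if_congr hmem rfl (congrArg some (Quotient.sound hpq))

theorem stackSetoid_projection_of_notMem {i : Fin n} (hi : i ∉ A) :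
    stackSetoid (projection A) a (.inl i) (.inr (.inl i)) :=
  stackSetoid_upEmb (p := .inl i) (q := .inr i) (projection_inl_inr.2 ⟨rfl, hi⟩)

theorem stackSetoid_projection_outEmb_downEmb {p : PV n} (hp : p ∉ Sum.inl '' A) :
    stackSetoid (projection A) a (outEmb p) (downEmb p) := by
  rcases p with i | i
  · exact stackSetoid_projection_of_notMem fun hi => hp ⟨i, hi, rfl⟩
  · exact Setoid.refl' _ _

theorem pmul_projection (hA : Sum.inl '' A ∈ a.classes) : pmul (projection A) a = a := by
  refine le_antisymm (fun p q hpq => ?_) fun p q hpq => ?_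
  · have hlabel : stackLabel A a (outEmb p) = stackLabel A a (outEmb q) :=
      stackSetoid_projection_le_ker_stackLabel hA hpq
    rw [stackLabel_outEmb, stackLabel_outEmb, Option.some_inj] at hlabel
    exact Quotient.exact hlabel
  · change stackSetoid (projection A) a (outEmb p) (outEmb q)
    by_cases hp : p ∈ Sum.inl '' A
    · obtain ⟨j, hj, rfl⟩ := (rel_iff_mem_of_mem_classes hA hp).1 hpq
      obtain ⟨i, hi, rfl⟩ := hp
      exact stackSetoid_upEmb (p := .inl i) (q := .inl j) (projection_inl_inl.2 (.inr ⟨hi, hj⟩))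
    · have hq : q ∉ Sum.inl '' A := fun hq =>
        hp ((rel_iff_mem_of_mem_classes hA hq).1 (a.symm' hpq))
      exact (stackSetoid _ a).trans' (stackSetoid_projection_outEmb_downEmb hp)
        ((stackSetoid _ a).trans' (stackSetoid_downEmb hpq)
          ((stackSetoid _ a).symm' (stackSetoid_projection_outEmb_downEmb hq)))

theorem floatCount_projection (hA : Sum.inl '' A ∈ a.classes) :
    floatCount (projection A) a = 1 := by
  obtain ⟨_, i, hi, rfl⟩ := Setoid.nonempty_of_mem_partition a.isPartition_classes hA
  have h_float (x : TV n)
      (hx : Quotient.mk (stackSetoid (projection A) a) x = Quotient.mk _ (.inr (.inl i))) :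
      isMiddle x := by
    have hlabel : stackLabel A a x = stackLabel A a (.inr (.inl i)) :=
      stackSetoid_projection_le_ker_stackLabel hA (Quotient.exact hx)
    obtain ⟨j, -, rfl⟩ := stackLabel_eq_none_iff.1
      (hlabel.trans (stackLabel_eq_none_iff.2 ⟨i, hi, rfl⟩))
    trivial
  refine Nat.card_eq_one_iff_exists.2 ⟨⟨_, h_float⟩, fun ⟨c, hc⟩ => Subtype.ext ?_⟩
  obtain ⟨x, rfl⟩ := Quotient.exists_rep c
  rcases x with k | k | k
  · exact (hc _ rfl).elim
  · by_cases hk : k ∈ A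
    · exact Quotient.sound (stackSetoid_downEmb (p := .inl k) (q := .inl i)
        ((rel_iff_mem_of_mem_classes hA ⟨k, hk, rfl⟩).2 ⟨i, hi, rfl⟩))
    · exact (hc (.inl k) (Quotient.sound (stackSetoid_projection_of_notMem hk))).elim
  · exact (hc _ rfl).elim

theorem twistMul_single (ξ : K) (a b : PElt n) (c d : K) :
    twistMul ξ (Finsupp.single a c) (Finsupp.single b d) =
      Finsupp.single (pmul a b) (c * d * ξ ^ floatCount a b) := by
  simp [twistMul]

theorem single_pmul_mem_twistedVariant (ξ : K) {S : Set (PElt n)} (ha : a ∈ S)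
    (hb : b ∈ S) : Finsupp.single (pmul a b) (ξ ^ floatCount a b) ∈ TwistedVariant ξ S := by
  rintro T ⟨h_gen, h_mul⟩
  simpa [twistMul_single] using h_mul _ (h_gen a ha) _ (h_gen b hb)

end

/-- Lemma 4.2. Let `S` be `M_n` or `J_n`, `k` a field and `ξ ∈ k∖{0}`.
If `α ∈ S` is not the identity, then `ξ·α ∈ S^ξ`. -/
theorem xi_smul_mem_twisted {K : Type} [Field K] (n : ℕ) (S : Set (PElt n))
    (hS : S = Motzkin n ∨ S = Jones n) (ξ : K) (hξ : ξ ≠ 0)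
    (a : PElt n) (ha : a ∈ S) (hne : a ≠ pid n) :
    Finsupp.single a ξ ∈ TwistedVariant ξ S := by
  have haM : a ∈ Motzkin n := by
    rcases hS with rfl | rfl
    exacts [ha, Jones_subset_Motzkin n ha]
  obtain ⟨A, hconn, hA⟩ := exists_ordConnected_upper_block_of_ne_pid haM hne
  obtain ⟨x, hx⟩ := exists_blockCard_eq_ncard hA
  have hπ : projection A ∈ S := by
    rcases hS with rfl | rfl
    · exact projection_mem_Motzkin hconn (hx ▸ ha.2 x)
    · exact projection_mem_Jones hconn (hx ▸ ha.2 x)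
  simpa only [pmul_projection hA, floatCount_projection hA, pow_one] using
    single_pmul_mem_twistedVariant ξ hπ ha
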